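/- arXiv:1604.08267 — 5 statements merged into one kernel-verified Lean document; each statement's English description precedes it below -/
import Mathlib

section
/- Let Γ be a finitely presented LERF group and let ρ : Γ → ℤ be a surjective homomorphism. Then the following are equivalent: (1) Ker ρ is not finitely generated; (2) there exist a normal finite-index subgroup Γ̃ of Γ, an integer n ≥ 2, a surjective homomorphism q̃ : Γ̃ → F_n onto the free group of rank n, and a homomorphism ψ : F_n → ℤ such that ψ ∘ q̃ equals the restriction of ρ to Γ̃. -/
/-!
**(1) ⇒ (2).** Choose `t` with `ρ t = 1` and generators `xᵢ ∈ Ker ρ` such that `t` and the `xᵢ`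
generate `Γ`. Finitely many relators suffice, and each of them is a product of conjugates
`t ^ k xᵢ^{±1} t ^ (-k)` with `|k| ≤ L` for one common `L`. Let `B` be generated by the
`t ^ k xᵢ t ^ (-k)` with `-L ≤ k ≤ L` and `A ≤ B` by those with `-L < k ≤ L`, so that
`t⁻¹ A t ≤ B`. This is the Bieri-Strebel description of `Γ` as an HNN extension of `B`, of which
only one consequence is needed (`exists_hnn_structure`): for every homomorphism `α : Γ → Q` there
is a homomorphism `Φ : Γ → F(Q / α(A)) ⋊ Q` with `Φ b = α b` for `b ∈ B` and `Φ t = (e₀, α t)`,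
where `e₀` is the trivial coset.

If `A = B`, then `t⁻¹ B t ≤ B`; in a LERF group this forces equality (`IsLERF.conj_mem`), so `B` is
normal, `Ker ρ = B`, and `Ker ρ` is finitely generated. Otherwise LERF gives `α : Γ → Q` with `Q`
finite and some `b ∈ B` with `α b ∉ α(A)`. On `Ker α` the first component of `Φ` is a homomorphism
to the free group `F(Q / α(A))`, whose image is free by Nielsen-Schreier and finitely generated,
and through which `ρ` factors as the total exponent. With `k` the order of `α t`, the elements
`t ^ k` and `b t ^ k b⁻¹` of `Ker α` are sent to positive words of the same length `k > 0` with
different first letters. In a cyclic group two elements with the same nonzero image in `ℤ` coincide,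
so the image has rank at least two.

**(2) ⇒ (1).** If `Ker ρ` were finitely generated, so would be `Ker ρ ∩ Γ̃`, and therefore its image
`Ker ψ`. But the kernel of a nonzero `ψ : F_n → ℤ` with `n ≥ 2` is not finitely generated
(`not_fg_ker_of_two_le`): let `F_n` act on `ℚ` by affine maps, `g` having slope `2 ^ ψ(g)`, so that
`Ker ψ` acts by translations. A finitely generated group of translations has bounded denominators,
whereas a nonzero translation, conjugated by powers of a generator of nonzero exponent, becomes
arbitrarily short.
-/

/-- A group `Γ` is LERF if for every finitely generated subgroup `A ≤ Γ` and every
`γ ∈ Γ \ A` there is a homomorphism `α` from `Γ` onto a finite group with `α γ ∉ α(A)`. -/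
def IsLERF (Γ : Type*) [Group Γ] : Prop :=
  ∀ A : Subgroup Γ, A.FG → ∀ γ : Γ, γ ∉ A →
    ∃ (Q : Type) (_ : Group Q) (_ : Finite Q) (α : Γ →* Q),
      Function.Surjective α ∧ α γ ∉ α '' (A : Set Γ)

/-- A group is finitely presented if it is isomorphic to the quotient of a finitely
generated free group by finitely many relations. -/
def IsFinitelyPresented (Γ : Type*) [Group Γ] : Prop :=
  ∃ (n : ℕ) (rels : Set (FreeGroup (Fin n))),
    rels.Finite ∧ Nonempty (PresentedGroup rels ≃* Γ)

/-! ### Free groups and finite presentations -/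

/-- A free group of infinite rank is not finitely generated: it has infinitely many homomorphisms to
`ℤ/2`, and such a homomorphism is determined by its values on generators. -/
theorem finite_of_fg_freeGroup {ι : Type*} [Group.FG (FreeGroup ι)] : Finite ι := by
  classical
  obtain ⟨S, hS, hfin⟩ := Group.fg_iff.mp (inferInstance : Group.FG (FreeGroup ι))
  have := hfin.to_subtype
  have h1 : Finite (ι → Multiplicative (ZMod 2)) := by
    refine Finite.of_injective
      (fun (c : ι → Multiplicative (ZMod 2)) (s : S) => FreeGroup.lift c (s : FreeGroup ι)) ?_
    intro c d h
    apply FreeGroup.lift.injective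
    exact MonoidHom.eq_of_eqOn_dense hS fun x hx => congrFun h ⟨x, hx⟩
  refine Finite.of_injective
    (fun i : ι => (Pi.mulSingle i (Multiplicative.ofAdd 1) : ι → Multiplicative (ZMod 2))) ?_
  intro i j h
  by_contra hne
  have := congrFun h i
  simp [Pi.mulSingle_eq_of_ne hne] at this

/-- A free group that is not cyclic has rank at least two; here non-cyclicity is witnessed by two
distinct elements with the same nonzero image in `ℤ`. -/
theorem exists_mulEquiv_freeGroup_of_ne {G : Type*} [Group G] [IsFreeGroup G] [Group.FG G]
    (s : G →* Multiplicative ℤ) {u v : G} (huv : u ≠ v) (hs : s u = s v) (hu : s u ≠ 1) :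
    ∃ n : ℕ, 2 ≤ n ∧ Nonempty (G ≃* FreeGroup (Fin n)) := by
  have e := IsFreeGroup.toFreeGroup G
  have : Group.FG (FreeGroup (IsFreeGroup.Generators G)) :=
    Group.fg_of_surjective (f := e.toMonoidHom) e.surjective
  have := finite_of_fg_freeGroup (ι := IsFreeGroup.Generators G)
  obtain ⟨n, ⟨en⟩⟩ := Finite.exists_equiv_fin (IsFreeGroup.Generators G)
  let e' := e.trans (FreeGroup.freeGroupCongr en)
  refine ⟨n, ?_, ⟨e'⟩⟩
  by_contra hn
  have hcyc : IsCyclic G := by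
    have : IsCyclic (FreeGroup (Fin n)) := by
      obtain rfl | rfl : n = 0 ∨ n = 1 := by omega
      · infer_instance
      · infer_instance
    exact isCyclic_of_surjective e'.symm e'.symm.surjective
  obtain ⟨g, hg⟩ := hcyc.exists_generator
  obtain ⟨a, rfl⟩ := Subgroup.mem_zpowers_iff.mp (hg u)
  obtain ⟨b, rfl⟩ := Subgroup.mem_zpowers_iff.mp (hg v)
  rw [map_zpow, map_zpow] at hs
  rw [map_zpow] at hu
  have hsg : (s g).toAdd ≠ 0 := by
    intro h
    apply hu
    rw [toAdd_eq_zero.mp h, one_zpow]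
  have h2 := congrArg Multiplicative.toAdd hs
  rw [toAdd_zpow, toAdd_zpow, smul_eq_mul, smul_eq_mul] at h2
  exact huv (by rw [mul_right_cancel₀ hsg h2])

/-- Positive words are reduced, so the free monoid embeds in the free group. -/
theorem mk_positive_injective {E : Type*} {l l' : List E}
    (h : FreeGroup.mk (l.map fun e => (e, true)) = FreeGroup.mk (l'.map fun e => (e, true))) :
    l = l' := by
  classical
  have hred : ∀ l : List E, FreeGroup.reduce (l.map fun e => (e, true)) =
      l.map fun e => (e, true) := by
    intro l
    apply FreeGroup.IsReduced.reduce_eq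
    rw [FreeGroup.IsReduced, List.isChain_map]
    induction l with
    | nil => simp
    | cons a l ih => cases l <;> simp_all
  have := FreeGroup.reduce.sound h
  rw [hred, hred] at this
  exact List.map_injective_iff.mpr (fun a b h => (Prod.mk.inj h).1) this

/-- Finite presentability does not depend on the finite generating set: with `h` and `j` lifts of the
identity of `Γ` between the two free groups, the kernel of `f` is the normal closure of the images
`h r` of the old relators together with the elements `h (j x) * x⁻¹`, `x` a new generator. -/
theorem exists_finite_normalClosure_eq_ker {n : ℕ} {Γ : Type*} [Group Γ]
    {rels : Set (FreeGroup (Fin n))} (hfin : rels.Finite) (e : PresentedGroup rels ≃* Γ)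
    {ι : Type*} [Finite ι] (f : FreeGroup ι →* Γ) (hf : Function.Surjective f) :
    ∃ S : Set (FreeGroup ι), S.Finite ∧ Subgroup.normalClosure S = f.ker := by
  let p : FreeGroup (Fin n) →* Γ := e.toMonoidHom.comp (PresentedGroup.mk rels)
  have hp : Function.Surjective p := e.surjective.comp (PresentedGroup.mk_surjective rels)
  have hpk : p.ker = Subgroup.normalClosure rels := by
    ext x
    simp only [p, MonoidHom.mem_ker, MonoidHom.comp_apply, MulEquiv.coe_toMonoidHom,
      map_eq_one_iff e e.injective]
    exact QuotientGroup.eq_one_iff x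
  choose a ha using fun i => hf (p (FreeGroup.of i))
  choose b hb using fun i => hp (f (FreeGroup.of i))
  let h := FreeGroup.lift a
  let j := FreeGroup.lift b
  have hfh : f.comp h = p := by ext i; simp [h, ha]
  have hpj : p.comp j = f := by ext i; simp [j, hb]
  set S : Set (FreeGroup ι) :=
    h '' rels ∪ Set.range fun i => h (j (FreeGroup.of i)) * (FreeGroup.of i)⁻¹ with hS
  have hmod : (QuotientGroup.mk' (Subgroup.normalClosure S)).comp (h.comp j) =
      QuotientGroup.mk' (Subgroup.normalClosure S) := by
    ext i
    rw [← mul_inv_eq_one, MonoidHom.comp_apply, ← map_inv, ← map_mul]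
    exact (QuotientGroup.eq_one_iff _).mpr
      (Subgroup.subset_normalClosure (Or.inr ⟨i, rfl⟩))
  refine ⟨S, (hfin.image h).union (Set.finite_range _), le_antisymm ?_ ?_⟩
  · apply Subgroup.normalClosure_le_normal
    rintro x (⟨r, hr, rfl⟩ | ⟨i, rfl⟩)
    · have : r ∈ p.ker := hpk ▸ Subgroup.subset_normalClosure hr
      rwa [← hfh] at this
    · change f (h (j (FreeGroup.of i)) * (FreeGroup.of i)⁻¹) = 1
      rw [map_mul, map_inv, ← MonoidHom.comp_apply f h, hfh, ← MonoidHom.comp_apply p j, hpj,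
        mul_inv_cancel]
  · intro g hg
    have h1 : j g ∈ Subgroup.normalClosure rels := by
      rw [← hpk, MonoidHom.mem_ker, ← MonoidHom.comp_apply p j, hpj]
      exact hg
    have h2 : Subgroup.normalClosure rels ≤ (Subgroup.normalClosure S).comap h := by
      apply Subgroup.normalClosure_le_normal
      exact fun r hr => Subgroup.subset_normalClosure (Or.inl ⟨r, hr, rfl⟩)
    have h3 := DFunLike.congr_fun hmod g
    rw [← QuotientGroup.eq_one_iff]
    exact h3.symm.trans ((QuotientGroup.eq_one_iff _).mpr (h2 h1))

/-! ### Windows of conjugates of the generators -/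

/-- A generating family of `Γ` consisting of one element of `ρ`-value `1` and finitely many elements
of `Ker ρ`. -/
theorem exists_adapted_generators {Γ : Type*} [Group Γ] {n : ℕ} (p : FreeGroup (Fin n) →* Γ)
    (hp : Function.Surjective p) (ρ : Γ →* Multiplicative ℤ) (hρ : Function.Surjective ρ) :
    ∃ f : FreeGroup (Option (Fin n)) →* Γ, Function.Surjective f ∧
      ρ (f (.of none)) = .ofAdd 1 ∧ ∀ i, ρ (f (.of (some i))) = 1 := by
  obtain ⟨t, ht⟩ := hρ (.ofAdd 1)
  let f : FreeGroup (Option (Fin n)) →* Γ := FreeGroup.lift fun o =>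
    o.elim t fun i => p (.of i) * t ^ (-(ρ (p (.of i))).toAdd)
  have hf0 : f (.of none) = t := by simp [f]
  have hfs : ∀ i, f (.of (some i)) = p (.of i) * t ^ (-(ρ (p (.of i))).toAdd) := by
    intro i; simp [f]
  refine ⟨f, ?_, by rw [hf0, ht], fun i => ?_⟩
  · rw [← MonoidHom.range_eq_top, eq_top_iff, ← MonoidHom.range_eq_top.mpr hp]
    rw [MonoidHom.range_eq_map, Subgroup.map_le_iff_le_comap, ← FreeGroup.closure_range_of,
      Subgroup.closure_le]
    rintro _ ⟨i, rfl⟩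
    refine ⟨.of (some i) * .of none ^ (ρ (p (.of i))).toAdd, ?_⟩
    rw [map_mul, map_zpow, hf0, hfs, mul_assoc, ← zpow_add, neg_add_cancel, zpow_zero, mul_one]
  · rw [hfs, map_mul, map_zpow, ht]
    apply Multiplicative.toAdd.injective
    simp

/-- The subgroup generated by the conjugates `t ^ k * x i * t ^ (-k)` with `a ≤ k ≤ b`. -/
def window {G κ : Type*} [Group G] (t : G) (x : κ → G) (a b : ℤ) : Subgroup G :=
  Subgroup.closure ((fun q : ℤ × κ => t ^ q.1 * x q.2 * t ^ (-q.1)) '' (Set.Icc a b ×ˢ Set.univ))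

theorem window_fg {G κ : Type*} [Group G] [Finite κ] (t : G) (x : κ → G) (a b : ℤ) :
    (window t x a b).FG :=
  (Subgroup.fg_iff _).mpr ⟨_, rfl, ((Set.finite_Icc a b).prod Set.finite_univ).image _⟩

theorem window_le {G κ : Type*} [Group G] {t : G} {x : κ → G} {a b : ℤ} {H : Subgroup G} :
    window t x a b ≤ H ↔ ∀ k, a ≤ k → k ≤ b → ∀ i, t ^ k * x i * t ^ (-k) ∈ H := by
  rw [window, Subgroup.closure_le]
  constructor
  · exact fun h k ha hb i => h ⟨(k, i), ⟨⟨ha, hb⟩, trivial⟩, rfl⟩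
  · rintro h _ ⟨⟨k, i⟩, ⟨⟨ha, hb⟩, -⟩, rfl⟩
    exact h k ha hb i

theorem mem_window {G κ : Type*} [Group G] (t : G) (x : κ → G) {a b k : ℤ} (ha : a ≤ k)
    (hb : k ≤ b) (i : κ) : t ^ k * x i * t ^ (-k) ∈ window t x a b :=
  window_le.mp le_rfl k ha hb i

theorem window_mono {G κ : Type*} [Group G] {t : G} {x : κ → G} {a b a' b' : ℤ} (ha : a' ≤ a)
    (hb : b ≤ b') : window t x a b ≤ window t x a' b' :=
  window_le.mpr fun _ hka hkb i => mem_window t x (ha.trans hka) (hkb.trans hb) i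

theorem window_conj {G κ : Type*} [Group G] {t : G} {x : κ → G} {a b : ℤ} (z : ℤ) {g : G}
    (hg : g ∈ window t x a b) : t ^ z * g * t ^ (-z) ∈ window t x (a + z) (b + z) := by
  have : window t x a b ≤ (window t x (a + z) (b + z)).comap (MulAut.conj (t ^ z)).toMonoidHom := by
    rw [window_le]
    intro k ha hb i
    have := mem_window t x (add_le_add_left ha z) (add_le_add_left hb z) i
    have key : t ^ z * (t ^ k * x i * t ^ (-k)) * (t ^ z)⁻¹ =
        t ^ (k + z) * x i * t ^ (-(k + z)) := by group
    rw [← key] at this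
    exact this
  rw [zpow_neg]
  exact this hg

theorem window_map {G G' κ : Type*} [Group G] [Group G'] (f : G →* G') (t : G) (x : κ → G)
    (a b : ℤ) : (window t x a b).map f = window (f t) (f ∘ x) a b := by
  rw [window, window, MonoidHom.map_closure, Set.image_image]
  simp

/-- Up to a power of the stable letter, every element of the free group lies in some window; in
particular every element of `Ker σ` does. -/
theorem exists_mem_window {κ : Type*} (σ : FreeGroup (Option κ) →* Multiplicative ℤ)
    (h0 : σ (.of none) = .ofAdd 1) (h1 : ∀ i, σ (.of (some i)) = 1) (g : FreeGroup (Option κ)) :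
    ∃ L : ℕ, g * .of none ^ (-(σ g).toAdd) ∈
      window (FreeGroup.of none) (fun i : κ => FreeGroup.of (some i)) (-L) L := by
  set t : FreeGroup (Option κ) := .of none with ht
  have hgen : ∀ o : Option κ, ∃ L : ℕ, .of o * t ^ (-(σ (.of o)).toAdd) ∈
      window t (fun i : κ => FreeGroup.of (some i)) (-L) L := by
    rintro (_ | i)
    · exact ⟨0, by rw [← ht, h0]; simp [one_mem]⟩
    · refine ⟨0, ?_⟩
      have := mem_window t (fun i : κ => FreeGroup.of (some i)) (a := -0) (b := 0) (k := 0)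
        (by simp) le_rfl i
      simpa [h1] using this
  have hinv : ∀ x : FreeGroup (Option κ), (∃ L : ℕ, x * t ^ (-(σ x).toAdd) ∈
      window t (fun i : κ => FreeGroup.of (some i)) (-L) L) → ∃ L : ℕ, x⁻¹ * t ^ (-(σ x⁻¹).toAdd) ∈
      window t (fun i : κ => FreeGroup.of (some i)) (-L) L := by
    rintro x ⟨L, hL⟩
    refine ⟨L + (σ x).toAdd.natAbs, ?_⟩
    have h2 := window_conj (-(σ x).toAdd) (inv_mem hL)
    have h3 := window_mono (a' := -((L + (σ x).toAdd.natAbs : ℕ) : ℤ))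
      (b' := ((L + (σ x).toAdd.natAbs : ℕ) : ℤ)) (by omega) (by omega) h2
    convert h3 using 1
    rw [map_inv, toAdd_inv]
    group
  have hmul : ∀ x y : FreeGroup (Option κ), (∃ L : ℕ, x * t ^ (-(σ x).toAdd) ∈
      window t (fun i : κ => FreeGroup.of (some i)) (-L) L) → (∃ L : ℕ, y * t ^ (-(σ y).toAdd) ∈
      window t (fun i : κ => FreeGroup.of (some i)) (-L) L) →
      ∃ L : ℕ, x * y * t ^ (-(σ (x * y)).toAdd) ∈
      window t (fun i : κ => FreeGroup.of (some i)) (-L) L := by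
    rintro x y ⟨L, hL⟩ ⟨M, hM⟩
    refine ⟨L + M + (σ x).toAdd.natAbs, ?_⟩
    have h2 := window_conj (σ x).toAdd hM
    have h3 := window_mono (a' := -((L + M + (σ x).toAdd.natAbs : ℕ) : ℤ))
      (b' := ((L + M + (σ x).toAdd.natAbs : ℕ) : ℤ)) (by omega) (by omega) h2
    have h4 := window_mono (a' := -((L + M + (σ x).toAdd.natAbs : ℕ) : ℤ))
      (b' := ((L + M + (σ x).toAdd.natAbs : ℕ) : ℤ)) (by omega) (by omega) hL
    convert mul_mem h4 h3 using 1
    rw [map_mul, toAdd_mul]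
    group
  induction g using FreeGroup.induction_on with
  | C1 => exact ⟨0, by simp [one_mem]⟩
  | of o => exact hgen o
  | inv_of o ih => exact hinv _ ih
  | mul x y hx hy => exact hmul _ _ hx hy

theorem exists_finite_subset_window {κ : Type*} (σ : FreeGroup (Option κ) →* Multiplicative ℤ)
    (h0 : σ (.of none) = .ofAdd 1) (h1 : ∀ i, σ (.of (some i)) = 1)
    {S : Set (FreeGroup (Option κ))} (hS : S.Finite) (hσ : ∀ g ∈ S, σ g = 1) :
    ∃ L : ℕ, S ⊆ window (FreeGroup.of none) (fun i : κ => FreeGroup.of (some i)) (-L) L := by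
  induction S, hS using Set.Finite.induction_on with
  | empty => exact ⟨0, Set.empty_subset _⟩
  | @insert g S _ _ ih =>
    obtain ⟨L, hL⟩ := ih fun g hg => hσ g (Or.inr hg)
    obtain ⟨M, hM⟩ := exists_mem_window σ h0 h1 g
    rw [hσ g (Or.inl rfl)] at hM
    refine ⟨L + M, Set.insert_subset ?_ fun s hs => ?_⟩
    · rw [toAdd_one, neg_zero, zpow_zero, mul_one] at hM
      refine window_mono ?_ ?_ hM <;> omega
    · have := hL hs
      refine window_mono ?_ ?_ this <;> omega

/-! ### The homomorphism to `F(E) ⋊ Q` -/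

/-- The action of `Q` by automorphisms on the free group on a `Q`-set `E`. -/
def freeGroupAut (Q E : Type*) [Group Q] [MulAction Q E] : Q →* MulAut (FreeGroup E) where
  toFun q := FreeGroup.freeGroupCongr (MulAction.toPerm q)
  map_one' := by
    ext x
    induction x using FreeGroup.induction_on <;> simp_all
  map_mul' p q := by
    ext x
    induction x using FreeGroup.induction_on <;> simp_all [mul_smul]

theorem freeGroupAut_of {Q E : Type*} [Group Q] [MulAction Q E] (q : Q) (e : E) :
    freeGroupAut Q E q (.of e) = .of (q • e) := by
  simp [freeGroupAut]

theorem freeGroupAut_mk {Q E : Type*} [Group Q] [MulAction Q E] (q : Q) (l : List E) :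
    freeGroupAut Q E q (.mk (l.map fun e => (e, true))) =
      .mk ((l.map (q • ·)).map fun e => (e, true)) := by
  simp [freeGroupAut]
  rfl

/-- The semidirect product `F(E) ⋊ Q` for a `Q`-set `E`. -/
abbrev FreeSemi (Q E : Type*) [Group Q] [MulAction Q E] := FreeGroup E ⋊[freeGroupAut Q E] Q

/-- If `τ q τ⁻¹` fixes `e`, then `(e, τ)` conjugates `q` to `τ q τ⁻¹`: the HNN relation holds in
`F(E) ⋊ Q`. -/
theorem conj_inr {Q E : Type*} [Group Q] [MulAction Q E] (e : E) (τ q : Q)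
    (h : (τ * q * τ⁻¹) • e = e) :
    (⟨.of e, τ⟩ : FreeSemi Q E) * SemidirectProduct.inr q * (⟨.of e, τ⟩ : FreeSemi Q E)⁻¹ =
      SemidirectProduct.inr (τ * q * τ⁻¹) := by
  rw [mul_inv_eq_iff_eq_mul]
  ext
  · simp only [SemidirectProduct.mul_left, SemidirectProduct.left_inr, map_one, mul_one, one_mul,
      SemidirectProduct.right_inr, freeGroupAut_of, h]
  · simp

/-- The first component of `(e, τ) ^ k` is the positive word `e · τe · τ²e ⋯`. -/
theorem pow_left_positive {Q E : Type*} [Group Q] [MulAction Q E] (e : E) (τ : Q) (k : ℕ) :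
    ∃ l : List E, ((⟨.of e, τ⟩ : FreeSemi Q E) ^ k).left = .mk (l.map fun e => (e, true)) ∧
      l.head? = if k = 0 then none else some e := by
  induction k with
  | zero => exact ⟨[], by simp [FreeGroup.one_eq_mk], rfl⟩
  | succ k ih =>
    obtain ⟨l, hl, -⟩ := ih
    refine ⟨e :: l.map (τ • ·), ?_, by simp⟩
    rw [pow_succ', SemidirectProduct.mul_left, hl, freeGroupAut_mk]
    rfl

/-- The part of the Bieri-Strebel theorem that is used: `Γ` has a stable letter `t`, a finitely
generated base `B ≤ Ker ρ` and a finitely generated associated subgroup `A ≤ B` with `t⁻¹ A t ≤ B`,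
and `b ↦ α b`, `t ↦ (e₀, α t)` extends to a homomorphism into `F(Q / α(A)) ⋊ Q`. -/
theorem exists_hnn_structure {Γ : Type*} [Group Γ] (hΓ : IsFinitelyPresented Γ)
    (ρ : Γ →* Multiplicative ℤ) (hρ : Function.Surjective ρ) :
    ∃ (t : Γ) (A B : Subgroup Γ), ρ t = .ofAdd 1 ∧ A.FG ∧ B.FG ∧ A ≤ B ∧ B ≤ ρ.ker ∧
      (∀ a ∈ A, t⁻¹ * a * t ∈ B) ∧ Subgroup.closure (insert t (B : Set Γ)) = ⊤ ∧
      ∀ (Q : Type) [Group Q] (α : Γ →* Q), ∃ Φ : Γ →* FreeSemi Q (Q ⧸ A.map α),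
        Φ t = ⟨.of ((1 : Q) : Q ⧸ A.map α), α t⟩ ∧
        ∀ b ∈ B, Φ b = SemidirectProduct.inr (α b) := by
  obtain ⟨n, rels, hfin, ⟨e⟩⟩ := hΓ
  obtain ⟨f, hf, h0, h1⟩ := exists_adapted_generators
    (e.toMonoidHom.comp (PresentedGroup.mk rels))
    (e.surjective.comp (PresentedGroup.mk_surjective rels)) ρ hρ
  obtain ⟨S, hS, hker⟩ := exists_finite_normalClosure_eq_ker hfin e f hf
  have hSker : ∀ s ∈ S, f s = 1 := fun s hs => by
    rw [← MonoidHom.mem_ker, ← hker]; exact Subgroup.subset_normalClosure hs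
  obtain ⟨L, hL⟩ := exists_finite_subset_window (ρ.comp f) h0 h1 hS
    fun s hs => by simp [hSker s hs]
  set t := f (.of none) with ht
  set x : Fin n → Γ := fun i => f (.of (some i)) with hx
  refine ⟨t, window t x (-L + 1) L, window t x (-L) L, h0, window_fg .., window_fg ..,
    window_mono (by omega) le_rfl, ?_, ?_, ?_, ?_⟩
  · rw [window_le]
    intro k _ _ i
    simp [MonoidHom.mem_ker, hx, h1]
  · intro a ha
    have := window_mono (a' := -L) (b' := L) (by omega) (by omega) (window_conj (-1) ha)
    simpa using this
  · rw [eq_top_iff, ← MonoidHom.range_eq_top.mpr hf, MonoidHom.range_eq_map,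
      Subgroup.map_le_iff_le_comap, ← FreeGroup.closure_range_of, Subgroup.closure_le]
    rintro _ ⟨_ | i, rfl⟩
    · exact Subgroup.subset_closure (Or.inl rfl)
    · refine Subgroup.subset_closure (Or.inr ?_)
      simpa using mem_window t x (a := -L) (b := L) (k := 0) (by omega) (by omega) i
  · intro Q _ α
    set A := window t x (-L + 1) L with hA
    let e₀ : Q ⧸ A.map α := ((1 : Q) : Q ⧸ A.map α)
    let T : FreeSemi Q (Q ⧸ A.map α) := ⟨.of e₀, α t⟩
    -- `y i` is the image of the leftmost conjugate of `x i` in the window; the other conjugates are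
    -- reached from it by successive conjugation with `T`.
    let y : Fin n → Q := fun i => α (t ^ (-L : ℤ) * x i * t ^ (L : ℤ))
    have hstab : ∀ a ∈ A, α a • e₀ = e₀ := by
      intro a ha
      change ((α a * 1 : Q) : Q ⧸ A.map α) = ((1 : Q) : Q ⧸ A.map α)
      rw [mul_one, eq_comm, QuotientGroup.eq]
      simpa using ⟨a, ha, rfl⟩
    have hconj : ∀ (i : Fin n) (j : ℕ), j ≤ 2 * L →
        T ^ j * SemidirectProduct.inr (y i) * (T ^ j)⁻¹ =
          SemidirectProduct.inr (α (t ^ (-L + j : ℤ) * x i * t ^ (-(-L + j) : ℤ))) := by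
      intro i j
      induction j with
      | zero => intro _; simp [y]
      | succ j ih =>
        intro hj
        have h2 := mem_window t x (a := -L + 1) (b := L) (k := -L + (j + 1 : ℕ))
          (by omega) (by omega) i
        have h3 : t ^ (-L + (j + 1 : ℕ) : ℤ) * x i * t ^ (-(-L + (j + 1 : ℕ)) : ℤ) =
            t * (t ^ (-L + j : ℤ) * x i * t ^ (-(-L + j) : ℤ)) * t⁻¹ := by
          push_cast; group
        have h4 : T ^ (j + 1) * SemidirectProduct.inr (y i) * (T ^ (j + 1))⁻¹ =
            T * (T ^ j * SemidirectProduct.inr (y i) * (T ^ j)⁻¹) * T⁻¹ := by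
          rw [pow_succ']; group
        rw [h3] at h2
        have h5 := hstab _ h2
        rw [h4, ih (by omega), h3]
        have h6 : ∀ w, α (t * w * t⁻¹) = α t * α w * (α t)⁻¹ := fun w => by simp
        rw [h6] at h5 ⊢
        exact conj_inr _ _ _ h5
    let Φ' : FreeGroup (Option (Fin n)) →* FreeSemi Q (Q ⧸ A.map α) := FreeGroup.lift fun o =>
      o.elim T fun i => T ^ L * SemidirectProduct.inr (y i) * (T ^ L)⁻¹
    have hΦ0 : Φ' (.of none) = T := by simp [Φ']
    have hΦs : ∀ i, Φ' (.of (some i)) = T ^ L * SemidirectProduct.inr (y i) * (T ^ L)⁻¹ := by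
      intro i; simp [Φ']
    have hwin : ∀ g ∈ window (FreeGroup.of none) (fun i : Fin n => FreeGroup.of (some i)) (-L) L,
        Φ' g = SemidirectProduct.inr (α (f g)) := by
      have : window (FreeGroup.of none) (fun i : Fin n => FreeGroup.of (some i)) (-L) L ≤
          Φ'.eqLocus (SemidirectProduct.inr.comp (α.comp f)) := by
        rw [window_le]
        intro k hk hk' i
        obtain ⟨j, hj⟩ := Int.eq_ofNat_of_zero_le (show 0 ≤ k + L by omega)
        obtain rfl : k = -L + j := by omega
        change Φ' _ = SemidirectProduct.inr (α (f _))
        have := hconj i j (by omega)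
        simp only [map_mul, map_zpow, hΦ0, hΦs, ← ht]
        simp only [map_mul, map_zpow, hx] at this
        rw [← this]
        group
      exact this
    -- The relators lie in the window, where the candidate map is `α ∘ f`; hence it kills them.
    have hle : f.ker ≤ Φ'.ker := by
      rw [← hker]
      apply Subgroup.normalClosure_le_normal
      intro s hs
      change Φ' s = 1
      rw [hwin s (hL hs), hSker s hs, map_one, map_one]
    let Φ := f.liftOfSurjective hf ⟨Φ', hle⟩
    have hΦ : ∀ g, Φ (f g) = Φ' g := fun g => by
      exact MonoidHom.liftOfRightInverse_comp_apply _ _ _ _ _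
    refine ⟨Φ, (hΦ _).trans hΦ0, ?_⟩
    intro b hb
    have : window t x (-L) L =
      (window (FreeGroup.of none) (fun i : Fin n => FreeGroup.of (some i)) (-L) L).map f :=
      (window_map f _ _ _ _).symm
    rw [this] at hb
    obtain ⟨g, hg, rfl⟩ := hb
    rw [hΦ, hwin g hg]

/-! ### The virtual factorization -/

/-- If the stable letter normalises the base group, then the base group is the whole of `Ker ρ`. -/
theorem fg_ker_of_conj_eq {Γ : Type*} [Group Γ] (ρ : Γ →* Multiplicative ℤ) {t : Γ}
    {B : Subgroup Γ} (ht : ρ t = .ofAdd 1) (hBfg : B.FG) (hB : B ≤ ρ.ker)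
    (hgen : Subgroup.closure (insert t (B : Set Γ)) = ⊤) (h1 : ∀ b ∈ B, t⁻¹ * b * t ∈ B)
    (h2 : ∀ b ∈ B, t * b * t⁻¹ ∈ B) : ρ.ker.FG := by
  have hnorm : B.Normal := by
    rw [← Subgroup.normalizer_eq_top_iff, eq_top_iff, ← hgen, Subgroup.closure_le]
    rintro g (rfl | hg)
    · rw [SetLike.mem_coe, Subgroup.mem_normalizer_iff]
      refine fun b => ⟨h2 b, fun hb => ?_⟩
      have := h1 _ hb
      simpa [mul_assoc] using this
    · exact Subgroup.le_normalizer hg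
  have key : ∀ g : Γ, g * t ^ (-(ρ g).toAdd) ∈ B := by
    intro g
    rw [← QuotientGroup.eq_one_iff, QuotientGroup.mk_mul, mul_eq_one_iff_eq_inv]
    have : QuotientGroup.mk' B = (zpowersHom (Γ ⧸ B) (QuotientGroup.mk' B t)).comp ρ := by
      refine MonoidHom.eq_of_eqOn_dense hgen ?_
      rintro g (rfl | hg)
      · simp [ht]
      · have h3 : ρ g = 1 := hB hg
        simpa [h3] using hg
    have := DFunLike.congr_fun this g
    simpa using this
  have : ρ.ker = B := by
    refine le_antisymm (fun g hg => ?_) hB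
    have := key g
    rw [show ρ g = 1 from hg] at this
    simpa using this
  rwa [this]

/-- A LERF group is not a strictly ascending HNN extension: `t⁻¹ B t ≤ B` implies `t B t⁻¹ ≤ B`, as
the two subgroups `α(t⁻¹ B t) ≤ α(B)` of a finite quotient have the same order. -/
theorem IsLERF.conj_mem {Γ : Type*} [Group Γ] (hL : IsLERF Γ) {t : Γ} {B : Subgroup Γ}
    (hBfg : B.FG) (h1 : ∀ b ∈ B, t⁻¹ * b * t ∈ B) : ∀ b ∈ B, t * b * t⁻¹ ∈ B := by
  intro b hb
  by_contra hn
  obtain ⟨Q, _, _, α, -, hα⟩ := hL B hBfg _ hn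
  apply hα
  have hle : (B.map α).map (MulAut.conj (α t)⁻¹).toMonoidHom ≤ B.map α := by
    rintro _ ⟨_, ⟨c, hc, rfl⟩, rfl⟩
    exact ⟨_, h1 c hc, by simp⟩
  have heq := Subgroup.eq_of_le_of_card_ge hle (Nat.card_congr
    ((B.map α).equivMapOfInjective _ (MulAut.conj (α t)⁻¹).injective).toEquiv).le
  have hmem : α b ∈ (B.map α).map (MulAut.conj (α t)⁻¹).toMonoidHom := by
    rw [heq]; exact ⟨b, hb, rfl⟩
  obtain ⟨_, ⟨c, hc, rfl⟩, hcb⟩ := hmem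
  refine ⟨c, hc, ?_⟩
  rw [map_mul, map_mul, map_inv, ← hcb]
  simp [mul_assoc]

/-- The homomorphism `F(E) → ℤ` sending every basis element to `1`. -/
def totalExp (E : Type*) : FreeGroup E →* Multiplicative ℤ := FreeGroup.lift fun _ => .ofAdd 1

theorem totalExp_aut {Q E : Type*} [Group Q] [MulAction Q E] (q : Q) (x : FreeGroup E) :
    totalExp E (freeGroupAut Q E q x) = totalExp E x := by
  have : (totalExp E).comp (freeGroupAut Q E q).toMonoidHom = totalExp E := by
    ext e; simp [totalExp, freeGroupAut_of]
  exact DFunLike.congr_fun this x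

/-- The total exponent of the first component; it is multiplicative on `F(E) ⋊ Q` because `Q`
permutes the basis. -/
def semiExp (Q E : Type*) [Group Q] [MulAction Q E] : FreeSemi Q E →* Multiplicative ℤ where
  toFun x := totalExp E x.left
  map_one' := by simp
  map_mul' x y := by simp [totalExp_aut]

/-- On the kernel of the second component `α` of `Φ`, the first component of `Φ` is a homomorphism. -/
def kerToFree {Γ Q E : Type*} [Group Γ] [Group Q] [MulAction Q E] (α : Γ →* Q)
    (Φ : Γ →* FreeSemi Q E) (h : ∀ g, (Φ g).right = α g) : α.ker →* FreeGroup E where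
  toFun g := (Φ g).left
  map_one' := by simp
  map_mul' x y := by
    have : α x = 1 := x.2
    simp [h, this]

theorem exists_virtual_factorization {Γ : Type*} [Group Γ] (hΓ : IsFinitelyPresented Γ)
    (hL : IsLERF Γ) (ρ : Γ →* Multiplicative ℤ) (hρ : Function.Surjective ρ)
    (hfg : ¬ Group.FG ρ.ker) :
    ∃ (Γt : Subgroup Γ), Γt.Normal ∧ Γt.FiniteIndex ∧
        ∃ (n : ℕ), 2 ≤ n ∧
          ∃ (qt : Γt →* FreeGroup (Fin n)), Function.Surjective qt ∧
            ∃ (ψ : FreeGroup (Fin n) →* Multiplicative ℤ),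
              ∀ x : Γt, ψ (qt x) = ρ (x : Γ) := by
  obtain ⟨t, A, B, ht, hA, hB, hAB, hBρ, hconj, hgen, hΦ⟩ := exists_hnn_structure hΓ ρ hρ
  have hne : ∃ b ∈ B, b ∉ A := by
    by_contra! hBA
    have h1 : ∀ b ∈ B, t⁻¹ * b * t ∈ B := fun b hb => hconj b (hBA b hb)
    exact hfg ((Group.fg_iff_subgroup_fg _).mpr
      (fg_ker_of_conj_eq ρ ht hB hBρ hgen h1 (hL.conj_mem hB h1)))
  obtain ⟨b, hbB, hbA⟩ := hne
  obtain ⟨Q, _, _, α, -, hα⟩ := hL A hA b hbA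
  obtain ⟨Φ, hΦt, hΦB⟩ := hΦ Q α
  have hright : ∀ g, (Φ g).right = α g := by
    have : SemidirectProduct.rightHom.comp Φ = α := by
      refine MonoidHom.eq_of_eqOn_dense hgen ?_
      rintro g (rfl | hg)
      · simp [hΦt]
      · simp [hΦB g hg]
    exact DFunLike.congr_fun this
  have hexp : ∀ g, totalExp _ (Φ g).left = ρ g := by
    have : (semiExp Q (Q ⧸ A.map α)).comp Φ = ρ := by
      refine MonoidHom.eq_of_eqOn_dense hgen ?_
      rintro g (rfl | hg)
      · simp [hΦt, semiExp, totalExp, ht]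
      · have : ρ g = 1 := hBρ hg
        simp [hΦB g hg, semiExp, this]
    exact DFunLike.congr_fun this
  let q := kerToFree α Φ hright
  have hq : ∀ g : α.ker, q g = (Φ g).left := fun _ => rfl
  have : Group.FG Γ := by
    obtain ⟨n, rels, -, ⟨e⟩⟩ := hΓ
    exact Group.fg_of_surjective (f := e.toMonoidHom.comp (PresentedGroup.mk rels))
      (e.surjective.comp (PresentedGroup.mk_surjective rels))
  have : Finite α.range := inferInstance
  have hfi : α.ker.FiniteIndex := inferInstance
  have : Group.FG q.range := inferInstance
  let s : q.range →* Multiplicative ℤ := (totalExp _).comp q.range.subtype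
  let k := orderOf (α t)
  have hk : 0 < k := orderOf_pos _
  -- `u` and `v` are sent by `q` to positive words with different first letters.
  let u : α.ker := ⟨t ^ k, by simp [MonoidHom.mem_ker, k, pow_orderOf_eq_one]⟩
  let v : α.ker := ⟨b * t ^ k * b⁻¹, by simp [MonoidHom.mem_ker, k, pow_orderOf_eq_one]⟩
  have hqv : q v = freeGroupAut Q _ (α b) (q u) := by
    rw [hq, hq]
    simp [v, u, hΦB b hbB]
  obtain ⟨l, hl, hhead⟩ := pow_left_positive ((1 : Q) : Q ⧸ A.map α) (α t) k
  have hqu : q u = .mk (l.map fun e => (e, true)) := by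
    rw [hq, ← hl, ← hΦt, ← map_pow]
  have huv : q.rangeRestrict u ≠ q.rangeRestrict v := by
    intro h
    have h := congrArg Subtype.val h
    rw [MonoidHom.coe_rangeRestrict, MonoidHom.coe_rangeRestrict, hqv, hqu, freeGroupAut_mk] at h
    have h := congrArg List.head? (mk_positive_injective h)
    rw [List.head?_map, hhead, if_neg hk.ne', Option.map_some, Option.some_inj] at h
    change ((1 : Q) : Q ⧸ A.map α) = ((α b * 1 : Q) : Q ⧸ A.map α) at h
    rw [QuotientGroup.eq, inv_one, one_mul, mul_one] at h
    exact hα h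
  have hsu : ∀ x : α.ker, s (q.rangeRestrict x) = ρ x := fun x => hexp x
  obtain ⟨n, hn, ⟨e⟩⟩ := exists_mulEquiv_freeGroup_of_ne s huv
    (by rw [hsu, hsu]; simp [u, v]) (by
      rw [hsu]
      intro h
      have h := congrArg Multiplicative.toAdd h
      simp [u, ht] at h
      omega)
  exact ⟨α.ker, inferInstance, hfi, n, hn, e.toMonoidHom.comp q.rangeRestrict,
    e.surjective.comp q.rangeRestrict_surjective, s.comp e.symm.toMonoidHom,
    fun x => by simp [hsu]⟩

/-! ### Kernels of homomorphisms from free groups to `ℤ` -/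

/-- A finitely generated subgroup of `ℚ` has a common denominator. -/
theorem exists_denominator (H : Subgroup (Multiplicative ℚ)) (hH : H.FG) :
    ∃ D : ℕ, D ≠ 0 ∧ ∀ c ∈ H, ∃ m : ℤ, (D : ℚ) * c.toAdd = m := by
  obtain ⟨S, rfl, hS⟩ := (Subgroup.fg_iff _).mp hH
  have : ∃ D : ℕ, D ≠ 0 ∧ ∀ c ∈ S, ∃ m : ℤ, (D : ℚ) * c.toAdd = m := by
    refine ⟨∏ c ∈ hS.toFinset, c.toAdd.den, Finset.prod_ne_zero_iff.mpr fun c _ => c.toAdd.den_nz,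
      fun c hc => ?_⟩
    obtain ⟨d, hd⟩ := Finset.dvd_prod_of_mem (fun c : Multiplicative ℚ => c.toAdd.den)
      (hS.mem_toFinset.mpr hc)
    refine ⟨d * c.toAdd.num, ?_⟩
    rw [hd]
    push_cast
    have := Rat.mul_den_eq_num c.toAdd
    linear_combination (d : ℚ) * this
  obtain ⟨D, hD, h⟩ := this
  refine ⟨D, hD, fun c hc => ?_⟩
  induction hc using Subgroup.closure_induction with
  | mem c hc => exact h c hc
  | one => exact ⟨0, by simp⟩
  | mul x y _ _ hx hy =>
    obtain ⟨a, ha⟩ := hx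
    obtain ⟨b, hb⟩ := hy
    exact ⟨a + b, by rw [toAdd_mul, mul_add, ha, hb]; simp⟩
  | inv x _ hx =>
    obtain ⟨a, ha⟩ := hx
    exact ⟨-a, by rw [toAdd_inv, mul_neg, ha]; simp⟩

/-- The free group acts on `ℚ` with the generator `j` acting by `z ↦ 1 + 2 ^ ψ(j) z` and every other
generator `k` by `z ↦ 2 ^ ψ(k) z`. Finite generation of `Ker ψ` would bound the denominators of the
translations by which it acts. -/
theorem not_fg_ker_of_two_le {n : ℕ} (hn : 2 ≤ n) (ψ : FreeGroup (Fin n) →* Multiplicative ℤ)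
    (hψ : ψ ≠ 1) : ¬ ψ.ker.FG := by
  intro hfg
  obtain ⟨i, hi⟩ : ∃ i, ψ (.of i) ≠ 1 := by
    by_contra! h
    exact hψ (by ext i; simp [h])
  have : Nontrivial (Fin n) := Fin.nontrivial_iff_two_le.mpr hn
  obtain ⟨j, hj⟩ := exists_ne i
  let m : FreeGroup (Fin n) → ℤ := fun g => (ψ g).toAdd
  have hm : ∀ x y, m (x * y) = m x + m y := fun x y => by simp [m]
  have hm1 : m 1 = 0 := by simp [m]
  have hmi : m (.of i) ≠ 0 := fun h => hi (toAdd_eq_zero.mp h)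
  let scale : ℤ → Equiv.Perm ℚ := fun k => Equiv.mulLeft₀ ((2 : ℚ) ^ k) (by positivity)
  let Θ : FreeGroup (Fin n) →* Equiv.Perm ℚ := FreeGroup.lift fun k =>
    Equiv.addLeft (if k = j then (1 : ℚ) else 0) * scale (m (.of k))
  have hΘ : ∀ k z, Θ (.of k) z = (if k = j then (1 : ℚ) else 0) + 2 ^ m (.of k) * z := by
    intro k z; simp [Θ, scale]
  have haff : ∀ g, ∀ z, Θ g z = Θ g 0 + 2 ^ m g * z := by
    have hinv : ∀ x, (∀ z, Θ x z = Θ x 0 + 2 ^ m x * z) →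
        ∀ z, Θ x⁻¹ z = Θ x⁻¹ 0 + 2 ^ m x⁻¹ * z := by
      intro x hx z
      have h1 : m x⁻¹ = - m x := by simp [m]
      have hcancel : ∀ z, Θ x ((Θ x)⁻¹ z) = z := fun z => by
        rw [← Equiv.Perm.mul_apply, mul_inv_cancel, Equiv.Perm.one_apply]
      apply (Θ x).injective
      rw [hx (_ + _), map_inv, hcancel, mul_add, ← add_assoc, ← hx, hcancel, h1, ← mul_assoc,
        ← zpow_add₀ two_ne_zero]
      simp
    intro g
    induction g using FreeGroup.induction_on with
    | C1 => simp [hm1]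
    | of k => intro z; rw [hΘ, hΘ]; ring
    | inv_of k ih => exact hinv _ ih
    | mul x y hx hy =>
      intro z
      rw [map_mul, Equiv.Perm.mul_apply, Equiv.Perm.mul_apply, hx, hy, hx (Θ y 0), hm,
        zpow_add₀ two_ne_zero]
      ring
  have hmker : ∀ x : ψ.ker, m x = 0 := fun x => toAdd_eq_zero.mpr x.2
  let τ : ψ.ker →* Multiplicative ℚ :=
    { toFun := fun x => .ofAdd (Θ x 0)
      map_one' := by simp
      map_mul' := fun x y => by
        rw [Subgroup.coe_mul, map_mul, Equiv.Perm.mul_apply, haff x (Θ y 0), hmker x, zpow_zero,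
          one_mul, ofAdd_add] }
  have : Group.FG ψ.ker := (Group.fg_iff_subgroup_fg _).mpr hfg
  obtain ⟨D, hD, hden⟩ := exists_denominator τ.range
    ((Group.fg_iff_subgroup_fg _).mp inferInstance)
  set a := FreeGroup.of i with ha
  set b := FreeGroup.of j with hb
  -- The commutator `c` lies in `Ker ψ` and acts as translation by `1 - 2 ^ m a`.
  have hΘa' : ∀ z, Θ a z = 2 ^ m a * z := fun z => by
    rw [ha, hΘ, if_neg hj.symm, zero_add]
  have hΘb' : ∀ z, Θ b z = 1 + 2 ^ m b * z := fun z => by rw [hb, hΘ, if_pos rfl]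
  obtain ⟨c, hc⟩ : ∃ c, c = b * a * b⁻¹ * a⁻¹ := ⟨_, rfl⟩
  have hcΘ : Θ c 0 = 1 - 2 ^ m a := by
    have h1 : Θ (c * a * b) 0 = Θ (b * a) 0 := by
      congr 2; rw [hc]; group
    have h2 : m c = 0 := by simp [m, hc]
    rw [map_mul, map_mul, Equiv.Perm.mul_apply, Equiv.Perm.mul_apply, haff c, h2, map_mul,
      Equiv.Perm.mul_apply] at h1
    simp only [hΘa', hΘb', mul_zero, add_zero, zpow_zero, one_mul, mul_one] at h1
    linarith
  have hcne : Θ c 0 ≠ 0 := by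
    rw [hcΘ, sub_ne_zero]
    intro h
    have := (zpow_eq_one_iff_right₀ (by norm_num : (0:ℚ) ≤ 2) (by norm_num)).mp h.symm
    exact hmi this
  have hΘa : ∀ N : ℤ, Θ (a ^ N) 0 = 0 := by
    have h1 : Θ a 0 = 0 := by rw [hΘa', mul_zero]
    intro N
    rw [map_zpow]
    exact Equiv.Perm.zpow_apply_eq_self_of_apply_eq_self h1 N
  have hint : ∀ N : ℤ, ∃ k : ℤ, (D : ℚ) * (2 ^ (N * m a) * Θ c 0) = k := by
    intro N
    have hmem : a ^ N * c * a ^ (-N) ∈ ψ.ker := by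
      rw [MonoidHom.mem_ker]; simp [hc, mul_comm]
    obtain ⟨k, hk⟩ := hden _ ⟨⟨_, hmem⟩, rfl⟩
    refine ⟨k, ?_⟩
    rw [← hk]
    change _ = (D : ℚ) * Θ (a ^ N * c * a ^ (-N)) 0
    have h2 : m (a ^ N) = N * m a := by simp [m]
    rw [map_mul, map_mul, Equiv.Perm.mul_apply, Equiv.Perm.mul_apply, hΘa, haff (a ^ N), hΘa, h2,
      zero_add]
  -- The sign of the exponent of `a` is chosen so that conjugation contracts.
  obtain ⟨N, hN⟩ : ∃ N : ℕ, (D : ℚ) * |Θ c 0| < 2 ^ N := pow_unbounded_of_one_lt _ (by norm_num)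
  obtain ⟨k, hk⟩ := hint (-N * (m a).sign)
  have hle : (2 : ℚ) ^ (-N * (m a).sign * m a) ≤ (2 ^ N)⁻¹ := by
    rw [mul_assoc, Int.sign_mul_self_eq_abs, ← zpow_natCast, ← zpow_neg]
    apply zpow_le_zpow_right₀ (by norm_num)
    have : 1 ≤ |m a| := Int.one_le_abs hmi
    nlinarith
  have hk0 : k ≠ 0 := by
    rintro rfl
    have : (D : ℚ) ≠ 0 := by exact_mod_cast hD
    have h2 : (2 : ℚ) ^ (-N * (m a).sign * m a) ≠ 0 := by positivity
    simp only [Int.cast_zero] at hk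
    exact mul_ne_zero this (mul_ne_zero h2 hcne) hk
  have hk1 : (1 : ℚ) ≤ |(k : ℚ)| := by exact_mod_cast Int.one_le_abs hk0
  rw [← hk, abs_mul, abs_mul, abs_of_pos (by positivity : (0:ℚ) < 2 ^ (-N * (m a).sign * m a)),
    Nat.abs_cast] at hk1
  have hpos : (0 : ℚ) < 2 ^ N := by positivity
  have : (D : ℚ) * (2 ^ (-N * (m a).sign * m a) * |Θ c 0|) ≤ (2 ^ N)⁻¹ * (D * |Θ c 0|) := by
    have := mul_le_mul_of_nonneg_right hle (by positivity : 0 ≤ (D : ℚ) * |Θ c 0|)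
    linarith
  have h3 : (2 ^ N : ℚ)⁻¹ * (D * |Θ c 0|) < 1 := by
    rw [inv_mul_lt_iff₀ hpos]; linarith
  linarith

theorem not_fg_ker_of_virtual_factorization {Γ : Type*} [Group Γ] (ρ : Γ →* Multiplicative ℤ)
    (hρ : Function.Surjective ρ) (Γt : Subgroup Γ) [Γt.FiniteIndex] {n : ℕ} (hn : 2 ≤ n)
    (qt : Γt →* FreeGroup (Fin n)) (hqt : Function.Surjective qt)
    (ψ : FreeGroup (Fin n) →* Multiplicative ℤ) (h : ∀ x : Γt, ψ (qt x) = ρ (x : Γ)) :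
    ¬ Group.FG ρ.ker := by
  intro hfg
  refine not_fg_ker_of_two_le hn ψ ?_ ?_
  · rintro rfl
    obtain ⟨t, ht⟩ := hρ (.ofAdd 1)
    obtain ⟨k, hk, hmem⟩ := Γt.exists_pow_mem_of_index_ne_zero Subgroup.FiniteIndex.index_ne_zero t
    have := h ⟨_, hmem.2⟩
    have := congrArg Multiplicative.toAdd this
    simp [ht] at this
    omega
  · let r : (Γt.subgroupOf ρ.ker) →* FreeGroup (Fin n) :=
      qt.comp ((ρ.ker.subtype.comp (Γt.subgroupOf ρ.ker).subtype).codRestrict Γt fun x => x.2)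
    have hr : ψ.ker = r.range := by
      ext y
      constructor
      · intro hy
        obtain ⟨x, rfl⟩ := hqt y
        exact ⟨⟨⟨x, (h x).symm.trans hy⟩, x.2⟩, rfl⟩
      · rintro ⟨x, rfl⟩
        exact (h _).trans x.1.2
    rw [hr, ← Group.fg_iff_subgroup_fg]
    infer_instance

/-- Let `Γ` be a finitely presented LERF group and `ρ : Γ → ℤ` a
surjective homomorphism.  Then `Ker ρ` is not finitely generated if and only if there
are a normal finite-index subgroup `Γ̃ ≤ Γ`, an `n ≥ 2`, an epimorphism
`q̃ : Γ̃ → F_n` and a homomorphism `ψ : F_n → ℤ` with `ψ ∘ q̃ = ρ|_Γ̃`. -/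
theorem ker_not_fg_iff_virtual_factorization_through_free
    {Γ : Type*} [Group Γ] (hΓ : IsFinitelyPresented Γ) (hL : IsLERF Γ)
    (ρ : Γ →* Multiplicative ℤ) (hρ : Function.Surjective ρ) :
    ¬ Group.FG ρ.ker ↔
      ∃ (Γt : Subgroup Γ), Γt.Normal ∧ Γt.FiniteIndex ∧
        ∃ (n : ℕ), 2 ≤ n ∧
          ∃ (qt : Γt →* FreeGroup (Fin n)), Function.Surjective qt ∧
            ∃ (ψ : FreeGroup (Fin n) →* Multiplicative ℤ),
              ∀ x : Γt, ψ (qt x) = ρ (x : Γ) := by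
  constructor
  · exact exists_virtual_factorization hΓ hL ρ hρ
  · rintro ⟨Γt, -, _, n, hn, qt, hqt, ψ, h⟩
    exact not_fg_ker_of_virtual_factorization ρ hρ Γt hn qt hqt ψ h
end

section
/- Let G be a finitely generated group and φ : G → ℤ a surjective homomorphism whose kernel Ker φ is generated by k elements. Then for every integer i ≥ 1 the subgroup G_i = Ker(G → ℤ → ℤ/iℤ) satisfies rk(G_i) ≤ k + 1; consequently rg(G,φ) = 0. -/
/-!
Choose `t : G` with `φ t = 1 ∈ ℤ`. An element `g` lies in `G_i` exactly when `φ g = i * c` for some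
integer `c`, and then `g * (t ^ i) ^ (-c)` lies in `Ker φ`. Hence `G_i` is generated by `Ker φ`
together with the single element `t ^ i` (`closure_insert_eq_modKer`), so `rk(G_i) ≤ k + 1`.
Since `φ` is onto, `[G : G_i] = i` (`index_modKer`), and the quotients
`rk(G_i) / [G : G_i] ≤ (k + 1) / i` tend to `0`, which gives the vanishing of the rank gradient.
-/

/-- The rank of a group: the minimal number of generators. -/
noncomputable def grank (G : Type*) [Group G] : ℕ :=
  sInf {n : ℕ | ∃ S : Finset G, S.card = n ∧ Subgroup.closure (S : Set G) = ⊤}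

/-- `modKer φ i` is the subgroup `G_i = Ker(G → ℤ → ℤ/iℤ)`. -/
def modKer {G : Type*} [Group G] (φ : G →* Multiplicative ℤ) (i : ℕ) : Subgroup G :=
  ((AddMonoidHom.toMultiplicative (Int.castAddHom (ZMod i))).comp φ).ker

/-- The rank gradient of `(G, φ)`:
`liminf_{i → ∞} rk(G_i) / [G : G_i]`. -/
noncomputable def rg {G : Type*} [Group G] (φ : G →* Multiplicative ℤ) : ℝ :=
  Filter.liminf
    (fun i : ℕ => (grank (modKer φ i) : ℝ) / ((modKer φ i).index : ℝ)) Filter.atTop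

theorem grank_le_card_of_closure_eq {G : Type*} [Group G] {H : Subgroup G} (T : Finset G)
    (hT : Subgroup.closure (T : Set G) = H) : grank H ≤ T.card := by
  classical
  subst hT
  let U : Finset (Subgroup.closure (T : Set G)) :=
    T.preimage Subtype.val Subtype.coe_injective.injOn
  have hU : Subgroup.closure (U : Set (Subgroup.closure (T : Set G))) = ⊤ := by
    rw [Finset.coe_preimage]
    exact Subgroup.closure_closure_coe_preimage
  have hle : grank (Subgroup.closure (T : Set G)) ≤ U.card := Nat.sInf_le ⟨U, rfl, hU⟩
  refine hle.trans ?_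
  exact Finset.card_le_card_of_injOn Subtype.val (fun x hx => by simpa [U] using hx)
    Subtype.coe_injective.injOn

theorem mem_modKer {G : Type*} [Group G] (φ : G →* Multiplicative ℤ) (i : ℕ) (g : G) :
    g ∈ modKer φ i ↔ (i : ℤ) ∣ (φ g).toAdd := by
  rw [← ZMod.intCast_zmod_eq_zero_iff_dvd]
  exact Iff.rfl

/-- For `i = 0` both sides are zero: `modKer φ 0 = φ.ker` has infinite index, which `Subgroup.index`
records as `0`. -/
theorem index_modKer {G : Type*} [Group G] (φ : G →* Multiplicative ℤ)
    (hφ : Function.Surjective φ) (i : ℕ) : (modKer φ i).index = i := by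
  have hs : Function.Surjective
      ((AddMonoidHom.toMultiplicative (Int.castAddHom (ZMod i))).comp φ) :=
    Function.Surjective.comp (g := AddMonoidHom.toMultiplicative (Int.castAddHom (ZMod i)))
      (fun z => ZMod.intCast_surjective z) hφ
  rw [modKer, Subgroup.index_ker, MonoidHom.range_eq_top.mpr hs, Subgroup.card_top]
  exact Nat.card_zmod i

theorem closure_insert_eq_modKer {G : Type*} [Group G] (φ : G →* Multiplicative ℤ)
    (S : Set G) (hgen : Subgroup.closure S = φ.ker) (t : G)
    (ht : φ t = Multiplicative.ofAdd 1) (i : ℕ) :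
    Subgroup.closure (insert (t ^ i) S) = modKer φ i := by
  apply le_antisymm
  · rw [Subgroup.closure_le, Set.insert_subset_iff]
    refine ⟨?_, fun s hs => ?_⟩
    · rw [SetLike.mem_coe, mem_modKer]
      simp [ht]
    · have h : s ∈ φ.ker := hgen ▸ Subgroup.subset_closure hs
      rw [SetLike.mem_coe, mem_modKer, MonoidHom.mem_ker.mp h]
      simp
  · intro g hg
    obtain ⟨c, hc⟩ := (mem_modKer φ i g).mp hg
    have h1 : g * (t ^ i) ^ (-c) ∈ Subgroup.closure (insert (t ^ i) S) := by
      apply Subgroup.closure_mono (Set.subset_insert _ _)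
      rw [hgen, MonoidHom.mem_ker, map_mul, map_zpow, map_pow, ht]
      apply Multiplicative.toAdd.injective
      simp only [toAdd_mul, toAdd_zpow, toAdd_pow, toAdd_ofAdd, toAdd_one, hc, smul_eq_mul,
        nsmul_eq_mul]
      ring
    have h2 : (t ^ i) ^ c ∈ Subgroup.closure (insert (t ^ i) S) :=
      Subgroup.zpow_mem _ (Subgroup.subset_closure (Set.mem_insert _ _)) c
    simpa [mul_assoc] using Subgroup.mul_mem _ h1 h2

/-- If `G` is finitely generated, `φ : G → ℤ` is surjective and
`Ker φ` is generated by `k` elements, then `rk(G_i) ≤ k + 1` for all `i ≥ 1`, and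
consequently `rg(G, φ) = 0`. -/
theorem rank_bound_and_rg_zero_of_fg_kernel
    {G : Type*} [Group G] [Group.FG G]
    (φ : G →* Multiplicative ℤ) (hφ : Function.Surjective φ)
    (k : ℕ) (S : Finset G) (hcard : S.card = k)
    (hgen : Subgroup.closure (S : Set G) = φ.ker) :
    (∀ i : ℕ, 1 ≤ i → grank (modKer φ i) ≤ k + 1) ∧ rg φ = 0 := by
  classical
  have hb : ∀ i : ℕ, grank (modKer φ i) ≤ k + 1 := by
    intro i
    obtain ⟨t, ht⟩ := hφ (Multiplicative.ofAdd 1)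
    have h := grank_le_card_of_closure_eq (H := modKer φ i) (insert (t ^ i) S) (by
      rw [Finset.coe_insert]
      exact closure_insert_eq_modKer φ S hgen t ht i)
    exact h.trans ((Finset.card_insert_le _ _).trans_eq (by rw [hcard]))
  refine ⟨fun i _ => hb i, Filter.Tendsto.liminf_eq ?_⟩
  refine squeeze_zero (fun i => by positivity) (fun i => ?_)
    (tendsto_const_div_atTop_nhds_zero_nat ((k : ℝ) + 1))
  rw [index_modKer φ hφ]
  gcongr
  exact_mod_cast hb i
end

section
/- For n ≥ 2, the kernel of any nonzero homomorphism ψ : F_n → ℤ from the free group of rank n to ℤ is not finitely generated. -/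
/-!
Let `a i = ψ (x i)`. Since `ψ ≠ 1`, some `a i` is nonzero; fix another generator `x j`. The free
group acts on the rational line by affine maps: `x j` acts by `y ↦ 2 ^ a j * y + 1` and every other
generator `x k` by `y ↦ 2 ^ a k * y`. The slope of a group element `g` is then `2 ^ ψ g`, so the
kernel of `ψ` acts by translations (`affineAction_apply`).

If the kernel were finitely generated, its translation lengths would have a common denominator
(`exists_common_denominator`). But the commutator of `x i` and `x j` lies in the kernel and
translates by `2 ^ a i - 1 ≠ 0`, and conjugating it by powers of `x i`, which fixes `0`, multiplies
this length by arbitrarily small powers of two, so no common denominator exists.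
-/

/-- The affine bijection `y ↦ 2 ^ a * y + b` of the rational line. -/
def affinePerm (a : ℤ) (b : ℚ) : Equiv.Perm ℚ where
  toFun y := 2 ^ a * y + b
  invFun y := (2 ^ a)⁻¹ * (y - b)
  left_inv y := by
    have : (2 : ℚ) ^ a ≠ 0 := by positivity
    field_simp
    ring
  right_inv y := by
    have : (2 : ℚ) ^ a ≠ 0 := by positivity
    field_simp
    ring

/-- The action of a free group on the rational line in which the generator `i` acts as the affine
map of slope `2 ^ ψ i` sending `0` to `b i`. -/
def affineAction {α : Type*} (ψ : FreeGroup α →* Multiplicative ℤ) (b : α → ℚ) :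
    FreeGroup α →* Equiv.Perm ℚ :=
  FreeGroup.lift fun i => affinePerm (ψ (FreeGroup.of i)).toAdd (b i)

theorem affineAction_of {α : Type*} (ψ : FreeGroup α →* Multiplicative ℤ) (b : α → ℚ)
    (i : α) (y : ℚ) : affineAction ψ b (FreeGroup.of i) y
      = 2 ^ (ψ (FreeGroup.of i)).toAdd * y + b i := by
  simp [affineAction, affinePerm]

/-- Every `g` acts as an affine map of slope `2 ^ ψ g`; in particular the kernel of `ψ` acts by
translations. -/
theorem affineAction_apply {α : Type*} (ψ : FreeGroup α →* Multiplicative ℤ) (b : α → ℚ)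
    (g : FreeGroup α) : ∀ y : ℚ,
      affineAction ψ b g y = 2 ^ (ψ g).toAdd * y + affineAction ψ b g 0 := by
  induction g using FreeGroup.induction_on with
  | C1 => simp
  | of i => intro y; simp [affineAction_of]
  | inv_of i h =>
    intro y
    have key : ∀ z, affineAction ψ b (FreeGroup.of i)⁻¹ z
        = (2 ^ (ψ (FreeGroup.of i)).toAdd)⁻¹ * (z - b i) := by
      intro z
      rw [map_inv, Equiv.Perm.inv_eq_iff_eq, affineAction_of]
      have : (2 : ℚ) ^ (ψ (FreeGroup.of i)).toAdd ≠ 0 := by positivity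
      field_simp
      ring
    rw [key, key, map_inv, toAdd_inv, zpow_neg]
    ring
  | mul g h hg hh =>
    intro y
    rw [map_mul, Equiv.Perm.mul_apply, Equiv.Perm.mul_apply, hh y, hg, hg (affineAction ψ b h 0),
      map_mul, toAdd_mul, zpow_add₀ two_ne_zero]
    ring

/-- The translation lengths of a finitely generated kernel lie in a finitely generated subgroup
of `ℚ`, hence have a common denominator. -/
theorem exists_common_denominator {α : Type*} (ψ : FreeGroup α →* Multiplicative ℤ) (b : α → ℚ)
    (h : Group.FG ψ.ker) :
    ∃ D : ℤ, D ≠ 0 ∧ ∀ g ∈ ψ.ker, ∃ z : ℤ, (D : ℚ) * affineAction ψ b g 0 = z := by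
  obtain ⟨S, hS⟩ := (Group.fg_iff_subgroup_fg _).1 h
  have trans : ∀ g ∈ ψ.ker, ∀ y, affineAction ψ b g y = y + affineAction ψ b g 0 := by
    intro g hg y
    rw [affineAction_apply, MonoidHom.mem_ker.1 hg]
    simp
  refine ⟨∏ s ∈ S, ((affineAction ψ b s 0).den : ℤ),
    Finset.prod_ne_zero_iff.2 fun s _ => by simp, fun g hg => ?_⟩
  rw [← hS] at hg
  induction hg using Subgroup.closure_induction with
  | mem s hs =>
    obtain ⟨c, hc⟩ := Finset.dvd_prod_of_mem
      (fun s => ((affineAction ψ b s 0).den : ℤ)) (Finset.mem_coe.1 hs)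
    refine ⟨c * (affineAction ψ b s 0).num, ?_⟩
    rw [hc]
    push_cast
    linear_combination (c : ℚ) * Rat.mul_den_eq_num (affineAction ψ b s 0)
  | one => exact ⟨0, by simp⟩
  | mul g k hg hk ihg ihk =>
    obtain ⟨u, hu⟩ := ihg
    obtain ⟨v, hv⟩ := ihk
    rw [hS] at hg
    refine ⟨u + v, ?_⟩
    rw [map_mul, Equiv.Perm.mul_apply, trans g hg]
    push_cast at hu hv ⊢
    linear_combination hu + hv
  | inv g hg ih =>
    obtain ⟨u, hu⟩ := ih
    rw [hS] at hg
    refine ⟨-u, ?_⟩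
    have h0 := trans g hg (affineAction ψ b g⁻¹ 0)
    rw [map_inv, ← Equiv.Perm.mul_apply, mul_inv_cancel, Equiv.Perm.one_apply] at h0
    rw [map_inv]
    push_cast at hu ⊢
    linear_combination -hu - (∏ s ∈ S, ((affineAction ψ b s 0).den : ℚ)) * h0

/-- For `n ≥ 2`, the kernel of any nonzero homomorphism
`ψ : F_n → ℤ` is not finitely generated. -/
theorem ker_not_fg_of_free_to_int
    (n : ℕ) (hn : 2 ≤ n)
    (ψ : FreeGroup (Fin n) →* Multiplicative ℤ) (hψ : ψ ≠ 1) :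
    ¬ Group.FG ψ.ker := by
  intro hfg
  obtain ⟨i, hi⟩ : ∃ i, ψ (FreeGroup.of i) ≠ 1 := by
    by_contra! H
    exact hψ (FreeGroup.ext_hom _ _ fun i => by simp [H i])
  have : Nontrivial (Fin n) := Fin.nontrivial_iff_two_le.2 hn
  obtain ⟨j, hji⟩ := exists_ne i
  let b : Fin n → ℚ := Pi.single j 1
  have hbi : b i = 0 := Pi.single_eq_of_ne hji.symm 1
  have hbj : b j = 1 := Pi.single_eq_same j 1
  obtain ⟨D, hD, hker⟩ := exists_common_denominator ψ b hfg
  set a : ℤ := (ψ (FreeGroup.of i)).toAdd with ha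
  have ha0 : a ≠ 0 := fun h => hi (toAdd_eq_zero.1 h)
  let x : FreeGroup (Fin n) := FreeGroup.of i
  let w : FreeGroup (Fin n) := FreeGroup.of j
  have hx : ∀ y, affineAction ψ b x y = 2 ^ a * y := fun y => by
    rw [affineAction_of, hbi, add_zero]
  have hw : ∀ y, affineAction ψ b w y = 2 ^ (ψ w).toAdd * y + 1 := fun y => by
    rw [affineAction_of, hbj]
  let c := x * w * x⁻¹ * w⁻¹
  have hc : ψ c = 1 := by
    simp only [c, map_mul, map_inv]
    rw [mul_comm (ψ x), mul_inv_cancel_right, mul_inv_cancel]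
  have hlen : affineAction ψ b c 0 = 2 ^ a - 1 := by
    -- Evaluate `c * w * x = x * w` at `0`; here `c` is a translation and `x` fixes `0`.
    have h1 : c * w * x = x * w := by simp [c]
    have h2 := congrArg (fun g => affineAction ψ b g 0) h1
    simp only [map_mul, Equiv.Perm.mul_apply, hx, hw] at h2
    rw [affineAction_apply, hc] at h2
    simp only [toAdd_one, zpow_zero] at h2
    linear_combination h2
  have hlen0 : (2 : ℚ) ^ a - 1 ≠ 0 := by
    rw [sub_ne_zero]
    intro h
    exact ha0 ((zpow_eq_one_iff_right₀ (by norm_num) (by norm_num)).1 h)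
  -- The exponent `-m * a` makes the slope `2 ^ (-m * a ^ 2)` small whatever the sign of `a`.
  have hsmall : ∀ m : ℕ, ∃ z : ℤ, (D : ℚ) * (2 ^ a - 1) = 2 ^ (m * a.natAbs ^ 2) * z := by
    intro m
    let k := x ^ (-(m : ℤ) * a)
    have hk0 : affineAction ψ b k 0 = 0 := by
      rw [map_zpow]
      exact Equiv.Perm.zpow_apply_eq_self_of_apply_eq_self (by rw [hx, mul_zero]) _
    have hψk : (ψ k).toAdd = -((m * a.natAbs ^ 2 : ℕ) : ℤ) := by
      rw [map_zpow, toAdd_zpow, ← ha]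
      push_cast
      rw [sq_abs, smul_eq_mul]
      ring
    have hconj : affineAction ψ b (k * c * k⁻¹) 0 = 2 ^ (ψ k).toAdd * (2 ^ a - 1) := by
      have hk1 : affineAction ψ b k⁻¹ 0 = 0 := by
        rw [map_inv, Equiv.Perm.inv_eq_iff_eq, hk0]
      rw [map_mul, map_mul, Equiv.Perm.mul_apply, Equiv.Perm.mul_apply, hk1, hlen,
        affineAction_apply, hk0, add_zero]
    obtain ⟨z, hz⟩ := hker (k * c * k⁻¹) (by simp [MonoidHom.mem_ker, hc])
    refine ⟨z, ?_⟩
    rw [← hz, hconj, hψk, zpow_neg, zpow_natCast]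
    field_simp
  obtain ⟨N, hN⟩ := hsmall 0
  rw [zero_mul, pow_zero, one_mul] at hN
  have hN0 : N ≠ 0 := by
    rintro rfl
    exact mul_ne_zero (Int.cast_ne_zero.2 hD) hlen0 (by simpa using hN)
  obtain ⟨z, hz⟩ := hsmall N.natAbs
  rw [hN] at hz
  have hdvd : (2 : ℤ) ^ (N.natAbs * a.natAbs ^ 2) ∣ N := ⟨z, by exact_mod_cast hz⟩
  have hle : 2 ^ (N.natAbs * a.natAbs ^ 2) ≤ N.natAbs := by
    have := Nat.le_of_dvd (Int.natAbs_pos.2 hN0) (Int.natAbs_dvd_natAbs.2 hdvd)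
    simpa [Int.natAbs_pow] using this
  have hge : N.natAbs ≤ N.natAbs * a.natAbs ^ 2 :=
    Nat.le_mul_of_pos_right _ (pow_pos (Int.natAbs_pos.2 ha0) 2)
  exact absurd (hge.trans_lt Nat.lt_two_pow_self) (not_lt.2 hle)
end

section
/- Let B be a group generated by k elements, let f : B → B be an injective endomorphism, and let G be the ascending HNN extension of B along f, with stable letter t. Let φ : G → ℤ be the homomorphism with φ(t) = 1 and φ(b) = 0 for all b ∈ B. Then for every integer i ≥ 1 the subgroup G_i = Ker(G → ℤ → ℤ/iℤ) is generated by the image of B together with t^i; in particular rk(G_i) ≤ k + 1 and rg(G,φ) = 0. -/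
/-- The ascending HNN extension `⟨B, t | t⁻¹ b t = f(b) for all b ∈ B⟩` of a group `B`
along an injective endomorphism `f : B → B`.  (In Mathlib's `HNNExtension G A B φ`
the stable letter satisfies `t * of a * t⁻¹ = of (φ a)` for `a ∈ A`; taking
`A = f.range`, `B = ⊤` and `φ (f b) = b` this says exactly `t⁻¹ * of b * t = of (f b)`.) -/
noncomputable def AscendingHNN {B : Type*} [Group B] (f : B →* B)
    (hf : Function.Injective f) : Type _ :=
  HNNExtension B f.range ⊤ ((MulEquiv.symm (MonoidHom.ofInjective hf)).trans
    (Subgroup.topEquiv (G := B)).symm)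

noncomputable instance {B : Type*} [Group B] (f : B →* B) (hf : Function.Injective f) :
    Group (AscendingHNN f hf) := by
  delta AscendingHNN; infer_instance

/-- The canonical map `B → ⟨B, t | t⁻¹ b t = f(b)⟩`. -/
noncomputable def AscendingHNN.of {B : Type*} [Group B] (f : B →* B)
    (hf : Function.Injective f) : B →* AscendingHNN f hf :=
  HNNExtension.of

/-- The stable letter of `⟨B, t | t⁻¹ b t = f(b)⟩`. -/
noncomputable def AscendingHNN.t {B : Type*} [Group B] (f : B →* B)
    (hf : Function.Injective f) : AscendingHNN f hf :=
  HNNExtension.t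

namespace AscendingHNN

variable {B : Type*} [Group B] (f : B →* B) (hf : Function.Injective f)

theorem of_mul_t (b : B) : of f hf b * t f hf = t f hf * of f hf (f b) := by
  have h := HNNExtension.t_mul_of (φ := (MulEquiv.symm (MonoidHom.ofInjective hf)).trans
    (Subgroup.topEquiv (G := B)).symm) (MonoidHom.ofInjective hf b)
  simp only [MulEquiv.trans_apply, MulEquiv.symm_apply_apply] at h
  exact h.symm

theorem of_mul_t_pow (n : ℕ) (b : B) :
    of f hf b * t f hf ^ n = t f hf ^ n * of f hf (f^[n] b) := by
  induction n generalizing b with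
  | zero => simp
  | succ n ih =>
    rw [pow_succ', ← mul_assoc, of_mul_t, mul_assoc, ih, mul_assoc, Function.iterate_succ_apply]

theorem inv_t_mul_of (b : B) : (t f hf)⁻¹ * of f hf b = of f hf (f b) * (t f hf)⁻¹ := by
  rw [inv_mul_eq_iff_eq_mul, ← mul_assoc, ← of_mul_t, mul_inv_cancel_right]

/-- The expression `t ^ a * b * t ^ (-c)` is not unique: both exponents can be raised at once. -/
theorem normal_form_shift (a c n : ℕ) (b : B) :
    t f hf ^ a * of f hf b * (t f hf ^ c)⁻¹ =
      t f hf ^ (a + n) * of f hf (f^[n] b) * (t f hf ^ (c + n))⁻¹ := by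
  rw [pow_add, mul_assoc (t f hf ^ a), mul_assoc (t f hf ^ a), ← of_mul_t_pow, add_comm c, pow_add]
  group

/-- Induction with `t⁻¹` as a separate generator, in place of a case for inverses. -/
theorem induction_on' {motive : AscendingHNN f hf → Prop} (x : AscendingHNN f hf)
    (of : ∀ b, motive (of f hf b)) (t : motive (t f hf)) (inv_t : motive (AscendingHNN.t f hf)⁻¹)
    (mul : ∀ x y, motive x → motive y → motive (x * y)) : motive x := by
  suffices h : motive x ∧ motive x⁻¹ from h.1
  refine HNNExtension.induction_on
    (motive := fun x : AscendingHNN f hf => motive x ∧ motive x⁻¹) x ?_ ?_ ?_ ?_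
  · exact fun b => ⟨of b, map_inv (AscendingHNN.of f hf) b ▸ of b⁻¹⟩
  · exact ⟨t, inv_t⟩
  · intro (x : AscendingHNN f hf) (y : AscendingHNN f hf) hx hy
    have h := mul _ _ hy.2 hx.2
    rw [← mul_inv_rev] at h
    exact ⟨mul _ _ hx.1 hy.1, h⟩
  · intro (x : AscendingHNN f hf) hx
    have h : motive x⁻¹⁻¹ := by rw [inv_inv]; exact hx.1
    exact ⟨hx.2, h⟩

/-- Every element is `t ^ a * b * t ^ (-c)`: the set of these elements contains `1` and is stable
under left multiplication by `B`, `t` and `t⁻¹`. -/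
theorem exists_normal_form (g : AscendingHNN f hf) :
    ∃ (a c : ℕ) (b : B), g = t f hf ^ a * of f hf b * (t f hf ^ c)⁻¹ := by
  -- The generators are handled by left multiplication, so the induction is on `x` in `x * y`.
  suffices h : ∀ x y : AscendingHNN f hf,
      (∃ (a c : ℕ) (b : B), y = t f hf ^ a * of f hf b * (t f hf ^ c)⁻¹) →
      ∃ (a c : ℕ) (b : B), x * y = t f hf ^ a * of f hf b * (t f hf ^ c)⁻¹ by
    simpa using h g 1 ⟨0, 0, 1, by simp⟩
  intro x
  induction x using induction_on' with
  | of b' =>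
    rintro _ ⟨a, c, b, rfl⟩
    refine ⟨a, c, f^[a] b' * b, ?_⟩
    rw [map_mul, ← mul_assoc, ← mul_assoc, of_mul_t_pow, mul_assoc (t f hf ^ a)]
  | t =>
    rintro _ ⟨a, c, b, rfl⟩
    exact ⟨a + 1, c, b, by rw [pow_succ']; group⟩
  | inv_t =>
    rintro _ ⟨a, c, b, rfl⟩
    rcases a with _ | a
    · refine ⟨0, c + 1, f b, ?_⟩
      rw [pow_zero, one_mul, one_mul, ← mul_assoc, inv_t_mul_of, pow_succ, mul_inv_rev, mul_assoc]
    · exact ⟨a, c, b, by rw [pow_succ']; group⟩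
  | mul x₁ x₂ h₁ h₂ =>
    intro y hy
    rw [mul_assoc]
    exact h₁ _ (h₂ y hy)

end AscendingHNN

/-- A subgroup generated by the image of a group generated by `S` and one further element has
rank at most `#S + 1`. -/
theorem grank_le_of_eq_sup {B G : Type*} [Group B] [Group G] (S : Finset B)
    (hgen : Subgroup.closure (S : Set B) = ⊤) (j : B →* G) (x : G) (H : Subgroup G)
    (hH : H = j.range ⊔ Subgroup.closure {x}) : grank H ≤ S.card + 1 := by
  classical
  have hT : Subgroup.closure (insert x (S.image j) : Set G) = H := by
    rw [Set.insert_eq, Subgroup.closure_union, Finset.coe_image, ← MonoidHom.map_closure, hgen,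
      ← MonoidHom.range_eq_map, hH, sup_comm]
  have hsub : (insert x (S.image j : Finset G) : Set G) ⊆ H := by
    rw [← hT]; exact Subgroup.subset_closure
  let T : Finset H := (insert x (S.image j)).subtype (· ∈ H)
  have hTH : Subgroup.closure (T : Set H) = ⊤ := by
    apply Subgroup.map_injective H.subtype_injective
    rw [MonoidHom.map_closure, ← MonoidHom.range_eq_map, Subgroup.range_subtype]
    refine Eq.trans (congrArg _ ?_) hT
    ext g
    simp only [T, Set.mem_image]
    constructor
    · rintro ⟨y, hy, rfl⟩
      simpa using hy
    · intro hg
      exact ⟨⟨g, hsub hg⟩, by simpa using hg, rfl⟩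
  calc grank H ≤ T.card := Nat.sInf_le ⟨T, rfl, hTH⟩
    _ ≤ (insert x (S.image j)).card := by
      rw [Finset.card_subtype]; exact Finset.card_filter_le _ _
    _ ≤ S.card + 1 := (Finset.card_insert_le _ _).trans (by grw [Finset.card_image_le])

theorem modKer_eq_sup {B : Type*} [Group B] (f : B →* B) (hf : Function.Injective f)
    (φ : AscendingHNN f hf →* Multiplicative ℤ)
    (hφt : φ (AscendingHNN.t f hf) = Multiplicative.ofAdd 1)
    (hφB : ∀ b : B, φ (AscendingHNN.of f hf b) = 1) (i : ℕ) (hi : 1 ≤ i) :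
    modKer φ i = (AscendingHNN.of f hf).range
      ⊔ Subgroup.closure {(AscendingHNN.t f hf) ^ i} := by
  apply le_antisymm
  · intro g hg
    obtain ⟨a, c, b, rfl⟩ := AscendingHNN.exists_normal_form f hf g
    rw [mem_modKer] at hg
    have hac : (i : ℤ) ∣ (a : ℤ) - c := by
      simpa [hφt, hφB, sub_eq_add_neg] using hg
    -- Raising both exponents by `a * (i - 1)` turns `a` into the multiple `a * i` of `i`.
    rw [AscendingHNN.normal_form_shift f hf a c (a * (i - 1))]
    have h1 : a + a * (i - 1) = i * a := by
      obtain ⟨m, rfl⟩ := Nat.exists_eq_add_of_le' hi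
      rw [Nat.add_sub_cancel]; ring
    obtain ⟨d, hd⟩ : i ∣ c + a * (i - 1) := by
      have h2 : ((c + a * (i - 1) : ℕ) : ℤ) = i * a - (a - c) := by
        have : ((a + a * (i - 1) : ℕ) : ℤ) = i * a := by rw [h1]; push_cast; rfl
        push_cast at this ⊢
        linarith
      rw [← Int.natCast_dvd_natCast, h2]
      exact dvd_sub (dvd_mul_right _ _) hac
    rw [h1, hd, pow_mul, pow_mul]
    have ht : AscendingHNN.t f hf ^ i ∈ (AscendingHNN.of f hf).range
        ⊔ Subgroup.closure {(AscendingHNN.t f hf) ^ i} :=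
      Subgroup.mem_sup_right (Subgroup.mem_closure_singleton_self _)
    exact mul_mem (mul_mem (pow_mem ht _) (Subgroup.mem_sup_left ⟨_, rfl⟩))
      (inv_mem (pow_mem ht _))
  · rw [sup_le_iff, Subgroup.closure_le, Set.singleton_subset_iff]
    constructor
    · rintro _ ⟨b, rfl⟩
      simp [mem_modKer, hφB]
    · simp [mem_modKer, hφt]

/-- Let `B` be a group generated by `k` elements, `f : B → B` an
injective endomorphism, `G = ⟨B, t | t⁻¹ b t = f(b)⟩` the ascending HNN extension, and
`φ : G → ℤ` the homomorphism with `φ(t) = 1` and `φ(b) = 0` for `b ∈ B`.  Then for all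
`i ≥ 1` the subgroup `G_i = Ker(G → ℤ → ℤ/iℤ)` is generated by the image of `B`
together with `t^i`; in particular `rk(G_i) ≤ k + 1` and `rg(G, φ) = 0`. -/
theorem ascendingHNN_modKer_gen_and_rg_zero
    {B : Type*} [Group B] (k : ℕ) (S : Finset B) (hcard : S.card = k)
    (hgen : Subgroup.closure (S : Set B) = ⊤)
    (f : B →* B) (hf : Function.Injective f)
    (φ : AscendingHNN f hf →* Multiplicative ℤ)
    (hφt : φ (AscendingHNN.t f hf) = Multiplicative.ofAdd 1)
    (hφB : ∀ b : B, φ (AscendingHNN.of f hf b) = 1) :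
    (∀ i : ℕ, 1 ≤ i →
      modKer φ i = (AscendingHNN.of f hf).range
          ⊔ Subgroup.closure {(AscendingHNN.t f hf) ^ i} ∧
      grank (modKer φ i) ≤ k + 1) ∧
    rg φ = 0 := by
  have hrank : ∀ i : ℕ, 1 ≤ i → grank (modKer φ i) ≤ k + 1 := fun i hi =>
    hcard ▸ grank_le_of_eq_sup S hgen _ _ _ (modKer_eq_sup f hf φ hφt hφB i hi)
  refine ⟨fun i hi => ⟨modKer_eq_sup f hf φ hφt hφB i hi, hrank i hi⟩, ?_⟩
  have hsurj : Function.Surjective φ := fun n =>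
    ⟨AscendingHNN.t f hf ^ n.toAdd, by rw [map_zpow, hφt, ← ofAdd_zsmul]; simp⟩
  refine Filter.Tendsto.liminf_eq ?_
  refine squeeze_zero' (g := fun i : ℕ => ((k + 1 : ℕ) : ℝ) / i)
    (Filter.Eventually.of_forall fun i => by positivity) ?_
    (tendsto_const_div_atTop_nhds_zero_nat _)
  filter_upwards [Filter.eventually_ge_atTop 1] with i hi
  rw [index_modKer φ hsurj]
  gcongr
  exact hrank i hi
end

section
/- Let π be the group with presentation ⟨t, a, b | t⁻¹ a t = a², t⁻¹ b² t = b⟩ and let φ : π → ℤ be the homomorphism determined by φ(t) = 1, φ(a) = φ(b) = 0. Then for every integer n ≥ 1 the subgroup π_n = Ker(π → ℤ → ℤ/nℤ) (kernel of φ followed by reduction mod n) is generated by 3 elements, namely t^n, a and b; in particular rk(π_n) ≤ 3. -/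
/-- The relators `t⁻¹ a t a⁻²` and `t⁻¹ b² t b⁻¹` of the presentation
`⟨t, a, b | t⁻¹ a t = a², t⁻¹ b² t = b⟩`, with `t, a, b` the generators `0, 1, 2`. -/
def piRels : Set (FreeGroup (Fin 3)) :=
  { (FreeGroup.of 0)⁻¹ * FreeGroup.of 1 * FreeGroup.of 0 *
      (FreeGroup.of 1 * FreeGroup.of 1)⁻¹,
    (FreeGroup.of 0)⁻¹ * (FreeGroup.of 2 * FreeGroup.of 2) * FreeGroup.of 0 *
      (FreeGroup.of 2)⁻¹ }

/-- The group `π = ⟨t, a, b | t⁻¹ a t = a², t⁻¹ b² t = b⟩`. -/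
abbrev piGroup : Type := PresentedGroup piRels

/-- `x y x⁻¹ = y²` iterates to `x^k y x^{-k} = y^(2^k)`. -/
lemma pow_conj_eq_of_conj_eq_sq {G : Type*} [Group G] {x y : G} (h : x * y * x⁻¹ = y ^ 2) (k : ℕ) :
    x ^ k * y * (x ^ k)⁻¹ = y ^ 2 ^ k := by
  induction k with
  | zero => simp
  | succ k ih =>
    calc x ^ (k + 1) * y * (x ^ (k + 1))⁻¹ = x * (x ^ k * y * (x ^ k)⁻¹) * x⁻¹ := by
          rw [pow_succ']; group
      _ = (x * y * x⁻¹) ^ 2 ^ k := by rw [ih, conj_pow]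
      _ = y ^ 2 ^ (k + 1) := by rw [h, ← pow_mul, pow_succ']

/-- If conjugation by `x` squares `y`, then a subgroup containing `y` and a positive power of `x`
also contains the opposite conjugate `x⁻¹ y x`. -/
lemma inv_conj_mem_of_conj_eq_sq {G : Type*} [Group G] {x y : G} (h : x * y * x⁻¹ = y ^ 2)
    {H : Subgroup G} {n : ℕ} (hn : 1 ≤ n) (hx : x ^ n ∈ H) (hy : y ∈ H) :
    x⁻¹ * y * x ∈ H := by
  obtain ⟨m, rfl⟩ : ∃ m, n = m + 1 := ⟨n - 1, by omega⟩
  have key : x⁻¹ * y * x = (x ^ (m + 1))⁻¹ * (x ^ m * y * (x ^ m)⁻¹) * x ^ (m + 1) := by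
    rw [pow_succ]; group
  rw [key, pow_conj_eq_of_conj_eq_sq h]
  exact H.mul_mem (H.mul_mem (H.inv_mem hx) (H.pow_mem hy _)) hx

lemma closure_pow_normal {G : Type*} [Group G] {t a b : G}
    (ha : t⁻¹ * a * t = a ^ 2) (hb : t * b * t⁻¹ = b ^ 2)
    (hgen : Subgroup.closure {t, a, b} = ⊤) {n : ℕ} (hn : 1 ≤ n) :
    (Subgroup.closure {t ^ n, a, b}).Normal := by
  set H := Subgroup.closure {t ^ n, a, b} with hH
  have htH : t ^ n ∈ H := Subgroup.subset_closure (by simp)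
  have haH : a ∈ H := Subgroup.subset_closure (by simp)
  have hbH : b ∈ H := Subgroup.subset_closure (by simp)
  have ha' : t * a * t⁻¹ ∈ H := by
    simpa using inv_conj_mem_of_conj_eq_sq (x := t⁻¹) (by simpa using ha) hn (by simpa using htH) haH
  have hb' : t⁻¹ * b * t ∈ H := inv_conj_mem_of_conj_eq_sq hb hn htH hbH
  have h1 : H ≤ H.comap (MulAut.conj t).toMonoidHom := by
    conv_lhs => rw [hH]
    rw [Subgroup.closure_le]
    rintro x (rfl | rfl | rfl)
    · simpa [← pow_succ', pow_succ] using htH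
    · simpa using ha'
    · simpa [hb] using H.pow_mem hbH 2
  have h2 : H ≤ H.comap (MulAut.conj t⁻¹).toMonoidHom := by
    conv_lhs => rw [hH]
    rw [Subgroup.closure_le]
    rintro x (rfl | rfl | rfl)
    · have : t⁻¹ * t ^ n * t = t ^ n := by rw [mul_assoc, ← pow_succ, pow_succ']; group
      simpa [this] using htH
    · simpa [ha] using H.pow_mem haH 2
    · simpa using hb'
  rw [← Subgroup.normalizer_eq_top_iff, eq_top_iff, ← hgen, Subgroup.closure_le]
  rintro x (rfl | rfl | rfl)
  · refine Subgroup.mem_normalizer_iff.2 fun g => ⟨fun hg => by simpa using h1 hg, fun hg => ?_⟩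
    simpa [mul_assoc] using h2 hg
  · exact Subgroup.le_normalizer haH
  · exact Subgroup.le_normalizer hbH

lemma grank_closure_le_three {G : Type*} [Group G] (x y z : G) :
    grank (Subgroup.closure {x, y, z}) ≤ 3 := by
  classical
  let S : Finset (Subgroup.closure {x, y, z}) :=
    {⟨x, Subgroup.subset_closure (by simp)⟩, ⟨y, Subgroup.subset_closure (by simp)⟩,
      ⟨z, Subgroup.subset_closure (by simp)⟩}
  have hS : Subgroup.closure (S : Set (Subgroup.closure {x, y, z})) = ⊤ := by
    rw [← Subgroup.closure_closure_coe_preimage]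
    congr 1
    ext ⟨g, hg⟩
    simp [S]
  exact (Nat.sInf_le ⟨S, rfl, hS⟩ : grank _ ≤ S.card).trans Finset.card_le_three

/-- Let `π = ⟨t, a, b | t⁻¹ a t = a², t⁻¹ b² t = b⟩` and let
`φ : π → ℤ` be the homomorphism with `φ(t) = 1`, `φ(a) = φ(b) = 0`.  Then for every
`n ≥ 1` the subgroup `π_n = Ker(π → ℤ → ℤ/nℤ)` is generated by the three elements
`t^n`, `a`, `b`; in particular `rk(π_n) ≤ 3`. -/
theorem piGroup_modKer_generated_by_three
    (φ : piGroup →* Multiplicative ℤ)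
    (hφt : φ (PresentedGroup.of 0) = Multiplicative.ofAdd 1)
    (hφa : φ (PresentedGroup.of 1) = 1)
    (hφb : φ (PresentedGroup.of 2) = 1) :
    ∀ n : ℕ, 1 ≤ n →
      modKer φ n = Subgroup.closure
          {(PresentedGroup.of (rels := piRels) 0) ^ n,
            PresentedGroup.of (rels := piRels) 1,
            PresentedGroup.of (rels := piRels) 2} ∧
      grank (modKer φ n) ≤ 3 := by
  intro n hn
  have hclosure : modKer φ n = Subgroup.closure
      {(PresentedGroup.of (rels := piRels) 0) ^ n,
        PresentedGroup.of (rels := piRels) 1,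
        PresentedGroup.of (rels := piRels) 2} := by
    set t : piGroup := PresentedGroup.of 0 with ht
    set a : piGroup := PresentedGroup.of 1 with ha
    set b : piGroup := PresentedGroup.of 2 with hb
    have hra : t⁻¹ * a * t = a ^ 2 := by
      have h : t⁻¹ * a * t * (a * a)⁻¹ = 1 :=
        PresentedGroup.one_of_mem (rels := piRels) (Or.inl rfl)
      rw [pow_two]
      exact mul_inv_eq_one.1 h
    have hrb : t * b * t⁻¹ = b ^ 2 := by
      have h : t⁻¹ * (b * b) * t * b⁻¹ = 1 :=
        PresentedGroup.one_of_mem (rels := piRels) (Or.inr rfl)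
      have h' : t⁻¹ * (b * b) * t = b := mul_inv_eq_one.1 h
      calc t * b * t⁻¹ = t * (t⁻¹ * (b * b) * t) * t⁻¹ := by rw [h']
        _ = b ^ 2 := by rw [pow_two]; group
    have hgen : Subgroup.closure {t, a, b} = ⊤ := by
      rw [← PresentedGroup.closure_range_of piRels]
      congr 1
      ext g
      simp [Fin.exists_fin_succ, ht, ha, hb, eq_comm]
    have hmem : ∀ g, g ∈ modKer φ n ↔ (n : ℤ) ∣ (φ g).toAdd := by
      intro g
      rw [← ZMod.intCast_zmod_eq_zero_iff_dvd]
      rfl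
    have hnormal := closure_pow_normal hra hrb hgen hn
    set H := Subgroup.closure {t ^ n, a, b} with hH
    have hle : H ≤ modKer φ n := by
      rw [hH, Subgroup.closure_le]
      rintro x (rfl | rfl | rfl)
      · simp [hmem, hφt]
      · simp [hmem, hφa]
      · simp [hmem, hφb]
    refine le_antisymm (fun g hg => ?_) hle
    have hsup : H ⊔ Subgroup.zpowers t = ⊤ := by
      rw [eq_top_iff, ← hgen, Subgroup.closure_le]
      rintro x (rfl | rfl | rfl)
      · exact Subgroup.mem_sup_right (Subgroup.mem_zpowers _)
      · exact Subgroup.mem_sup_left (Subgroup.subset_closure (by simp))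
      · exact Subgroup.mem_sup_left (Subgroup.subset_closure (by simp))
    obtain ⟨h, hh, _, ⟨k, rfl⟩, rfl⟩ := Subgroup.mem_sup_of_normal_left.1
      (hsup ▸ Subgroup.mem_top g : g ∈ H ⊔ Subgroup.zpowers t)
    have hk := (hmem _).1 (((modKer φ n).mul_mem_cancel_left (hle hh)).1 hg)
    obtain ⟨m, rfl⟩ : (n : ℤ) ∣ k := by simpa [hφt] using hk
    refine H.mul_mem hh ?_
    simp only [zpow_mul, zpow_natCast]
    exact H.zpow_mem (Subgroup.subset_closure (by simp)) m
  refine ⟨hclosure, ?_⟩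
  rw [hclosure]
  exact grank_closure_le_three _ _ _
end
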